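/- For every X ∈ 𝒞, the series Σ_{g∈G} X_g* X_g converges unconditionally in the operator norm, with sum π(X*X); equivalently, for every ε > 0 there is a finite set L ⊆ G such that for every finite K ⊇ L, 0 ≤ π(X*X) − Σ_{g∈K} X_g* X_g ≤ ε²·I. This generalizes Plancherel's theorem. -/

import Mathlib

set_option synthInstance.maxHeartbeats 1000000
set_option maxHeartbeats 1000000

open scoped InnerProductSpace
open ContinuousLinearMap

noncomputable section

/-- `l2 G H` is the Hilbert space `ℓ²(G,H)` of square-summable `H`-valued functions on `G`. -/
abbrev l2 (G : Type) (H : Type) [NormedAddCommGroup H] : Type := lp (fun _ : G => H) 2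

/-!
The operators on `ℓ²(G, H)` form a (pre-)Hilbert module over the block-diagonal ones, with inner
product `⟨X, Y⟩ = π (X⋆ Y)`, in which the translations `L g` are orthonormal and `X_g = ⟨L g, X⟩`.
Bessel's identity says that the `t`-th remainder of Plancherel's formula is `⟨R, R⟩`, where
`R = X - ∑ g ∈ t, L g * X_g`; in particular it is positive. If `Y` is a finite sum of terms
`L g * D` with `D` block diagonal, then for all large `t` the operators `X` and `X - Y` have the
same remainder `R`, so `⟨R, R⟩ ≤ ⟨X - Y, X - Y⟩ ≤ ‖X - Y‖²`. The crossed product lies in the closure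
of such `Y`: its generators are homogeneous for the `G`-grading of operators, homogeneous operators
are closed under products and adjoints, and those of degree `g` have the form `L g * D`.
-/

section HilbertModule

open Filter Topology

variable {A ι : Type*} [CStarAlgebra A] [PartialOrder A]

/-- A positive map on a unital C⋆-algebra is a conditional expectation if it is unital and linear
over its own range. The subalgebra it projects onto is encoded as the range of `E`. -/
structure IsConditionalExpectation (E : A →ₚ[ℂ] A) : Prop where
  map_one : E 1 = 1
  map_mul_map (a b : A) : E (a * E b) = E a * E b

/-- The family `u` is orthonormal for the `A`-valued inner product `⟨a, b⟩ = E (a⋆ b)`. -/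
structure IsOrthonormalSystem (E : A →ₚ[ℂ] A) (u : ι → A) : Prop where
  map_star_mul_self (i : ι) : E (star (u i) * u i) = 1
  map_star_mul_of_ne {i j : ι} (hij : i ≠ j) : E (star (u i) * u j) = 0

/-- The partial sum over `s` of the Fourier series `∑ u i ⟨u i, a⟩` of `a`, with coefficients
`⟨u i, a⟩ = E ((u i)⋆ a)`. -/
def fourierSum (E : A →ₚ[ℂ] A) (u : ι → A) (s : Finset ι) : A →ₗ[ℂ] A :=
  ∑ i ∈ s, LinearMap.mulLeft ℂ (u i) ∘ₗ E.toLinearMap ∘ₗ LinearMap.mulLeft ℂ (star (u i))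

lemma fourierSum_apply (E : A →ₚ[ℂ] A) (u : ι → A) (s : Finset ι) (a : A) :
    fourierSum E u s a = ∑ i ∈ s, u i * E (star (u i) * a) := by
  simp [fourierSum]

variable {E : A →ₚ[ℂ] A} {u : ι → A}

lemma IsOrthonormalSystem.coeff_mul_map [DecidableEq ι] (hu : IsOrthonormalSystem E u)
    (hE : IsConditionalExpectation E) (i j : ι) (b : A) :
    E (star (u i) * (u j * E b)) = if i = j then E b else 0 := by
  rw [← mul_assoc, hE.map_mul_map]
  split_ifs with hij
  · rw [hij, hu.map_star_mul_self, one_mul]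
  · rw [hu.map_star_mul_of_ne hij, zero_mul]

lemma IsOrthonormalSystem.coeff_sub_fourierSum (hu : IsOrthonormalSystem E u)
    (hE : IsConditionalExpectation E) {s : Finset ι} {i : ι} (hi : i ∈ s) (a : A) :
    E (star (u i) * (a - fourierSum E u s a)) = 0 := by
  classical
  simp only [fourierSum_apply, mul_sub, Finset.mul_sum, map_sub, map_sum, hu.coeff_mul_map hE,
    Finset.sum_ite_eq, if_pos hi, sub_self]

lemma IsOrthonormalSystem.eventually_fourierSum_eq (hu : IsOrthonormalSystem E u)
    (hE : IsConditionalExpectation E) {a : A}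
    (ha : a ∈ Submodule.span ℂ {x | ∃ i b, u i * E b = x}) :
    ∀ᶠ s in atTop, fourierSum E u s a = a := by
  classical
  induction ha using Submodule.span_induction with
  | mem _ h =>
    obtain ⟨i, b, rfl⟩ := h
    filter_upwards [eventually_ge_atTop {i}] with s hs
    simp only [fourierSum_apply, hu.coeff_mul_map hE, mul_ite, mul_zero, Finset.sum_ite_eq',
      if_pos (Finset.singleton_subset_iff.mp hs)]
  | zero => simp only [map_zero, eventually_true]
  | add x y _ _ hx hy =>
    filter_upwards [hx, hy] with s hsx hsy
    rw [map_add, hsx, hsy]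
  | smul c x _ hx =>
    filter_upwards [hx] with s hsx
    rw [map_smul, hsx]

variable [StarOrderedRing A]

lemma IsConditionalExpectation.map_map_mul (hE : IsConditionalExpectation E) (a b : A) :
    E (E a * b) = E a * E b := by
  have h := congrArg star (hE.map_mul_map (star b) (star a))
  rwa [← map_star, star_mul, star_mul, star_star, ← map_star, ← map_star, star_star,
    star_star] at h

lemma IsConditionalExpectation.map_star_mul_self_le (hE : IsConditionalExpectation E) (a : A) :
    E (star a * a) ≤ ‖a‖ ^ 2 • (1 : A) :=
  calc E (star a * a) ≤ E (‖a‖ ^ 2 • (1 : A)) := by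
        gcongr
        simpa only [Algebra.algebraMap_eq_smul_one] using
          CStarAlgebra.star_mul_le_algebraMap_norm_sq (a := a)
    _ = ‖a‖ ^ 2 • (1 : A) := by rw [PositiveLinearMap.map_smul_of_tower, hE.map_one]

namespace IsOrthonormalSystem

lemma map_star_mul_sub_fourierSum (hu : IsOrthonormalSystem E u) (hE : IsConditionalExpectation E)
    (s : Finset ι) (a : A) :
    E (star (a - fourierSum E u s a) * (a - fourierSum E u s a)) =
      E (star a * a) - ∑ i ∈ s, star (E (star (u i) * a)) * E (star (u i) * a) := by
  set r := a - fourierSum E u s a with hr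
  have orthogonal : E (star (fourierSum E u s a) * r) = 0 := by
    simp only [fourierSum_apply, star_sum, star_mul, Finset.sum_mul, map_sum, mul_assoc,
      ← map_star]
    refine Finset.sum_eq_zero fun i hi ↦ ?_
    rw [hE.map_map_mul, hu.coeff_sub_fourierSum hE hi, mul_zero]
  calc E (star r * r) = E (star a * r) := by
        conv_lhs => rw [hr, star_sub, sub_mul, ← hr, map_sub, orthogonal, sub_zero]
    _ = E (star a * a) - ∑ i ∈ s, star (E (star (u i) * a)) * E (star (u i) * a) := by
        simp only [hr, fourierSum_apply, mul_sub, Finset.mul_sum, map_sub, map_sum, ← mul_assoc,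
          hE.map_mul_map, ← map_star, star_mul, star_star]

lemma sum_star_coeff_mul_coeff_le (hu : IsOrthonormalSystem E u) (hE : IsConditionalExpectation E)
    (s : Finset ι) (a : A) :
    ∑ i ∈ s, star (E (star (u i) * a)) * E (star (u i) * a) ≤ E (star a * a) := by
  rw [← sub_nonneg, ← hu.map_star_mul_sub_fourierSum hE]
  exact E.map_nonneg (star_mul_self_nonneg _)

lemma map_star_mul_self_sub_sum_le (hu : IsOrthonormalSystem E u) (hE : IsConditionalExpectation E)
    {s : Finset ι} {b : A} (hb : fourierSum E u s b = b) (a : A) :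
    E (star a * a) - ∑ i ∈ s, star (E (star (u i) * a)) * E (star (u i) * a) ≤
      ‖a - b‖ ^ 2 • (1 : A) := by
  have remainder_eq : a - fourierSum E u s a = (a - b) - fourierSum E u s (a - b) := by
    rw [map_sub, hb, sub_sub_sub_cancel_right]
  calc
    _ = E (star (a - b) * (a - b)) -
        ∑ i ∈ s, star (E (star (u i) * (a - b))) * E (star (u i) * (a - b)) := by
      rw [← hu.map_star_mul_sub_fourierSum hE, remainder_eq, hu.map_star_mul_sub_fourierSum hE]
    _ ≤ E (star (a - b) * (a - b)) :=
      sub_le_self _ (Finset.sum_nonneg fun _ _ ↦ star_mul_self_nonneg _)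
    _ ≤ _ := hE.map_star_mul_self_le _

theorem eventually_map_star_mul_self_sub_sum_le (hu : IsOrthonormalSystem E u)
    (hE : IsConditionalExpectation E) {a : A}
    (ha : a ∈ closure (Submodule.span ℂ {x | ∃ i b, u i * E b = x} : Set A)) {ε : ℝ} (hε : 0 < ε) :
    ∀ᶠ s in atTop,
      E (star a * a) - ∑ i ∈ s, star (E (star (u i) * a)) * E (star (u i) * a) ≤
        ε ^ 2 • (1 : A) := by
  obtain ⟨b, hb, hab⟩ := Metric.mem_closure_iff.mp ha ε hε
  filter_upwards [hu.eventually_fourierSum_eq hE hb] with s hs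
  refine (hu.map_star_mul_self_sub_sum_le hE hs a).trans ?_
  rw [← dist_eq_norm]
  gcongr

end IsOrthonormalSystem

lemma tendsto_of_forall_eventually_le_of_sub_le {f : ι → A} {l : Filter ι} {a : A}
    (hle : ∀ᶠ i in l, f i ≤ a)
    (hsub : ∀ ε : ℝ, 0 < ε → ∀ᶠ i in l, a - f i ≤ ε • (1 : A)) : Tendsto f l (𝓝 a) := by
  refine Metric.nhds_basis_closedBall.tendsto_right_iff.mpr fun ε hε ↦ ?_
  filter_upwards [hle, hsub ε hε] with i hi hiε
  rw [mem_closedBall_iff_norm', CStarAlgebra.norm_le_iff_le_algebraMap _ hε.le (sub_nonneg.mpr hi),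
    Algebra.algebraMap_eq_smul_one]
  exact hiε

theorem IsOrthonormalSystem.hasSum_star_coeff_mul_coeff (hu : IsOrthonormalSystem E u)
    (hE : IsConditionalExpectation E) {a : A}
    (ha : a ∈ closure (Submodule.span ℂ {x | ∃ i b, u i * E b = x} : Set A)) :
    HasSum (fun i ↦ star (E (star (u i) * a)) * E (star (u i) * a)) (E (star a * a)) := by
  rw [HasSum, SummationFilter.unconditional_filter]
  refine tendsto_of_forall_eventually_le_of_sub_le
    (.of_forall fun s ↦ hu.sum_star_coeff_mul_coeff_le hE s a) fun ε hε ↦ ?_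
  simpa only [Real.sq_sqrt hε.le] using
    hu.eventually_map_star_mul_self_sub_sum_le hE ha (Real.sqrt_pos.mpr hε)

end HilbertModule

section BlockOperators

open scoped lp ComplexOrder

variable {G H : Type*} [NormedAddCommGroup H] [InnerProductSpace ℂ H]

/-- `π` sends each operator on `ℓ²(G, H)` to its block diagonal, specified through its matrix
coefficients. -/
def IsBlockDiagonalCompression [DecidableEq G]
    (π : (ℓ²(G, H) →L[ℂ] ℓ²(G, H)) → (ℓ²(G, H) →L[ℂ] ℓ²(G, H))) : Prop :=
  ∀ (X : ℓ²(G, H) →L[ℂ] ℓ²(G, H)) (ξ η : ℓ²(G, H)),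
    ⟪π X ξ, η⟫_ℂ = ∑' g : G, ⟪X (lp.single 2 g (ξ g)), lp.single 2 g (η g)⟫_ℂ

/-- `L` is the left translation action of `G` on `ℓ²(G, H)`. -/
def IsLeftTranslation [Group G] (L : G → (ℓ²(G, H) →L[ℂ] ℓ²(G, H))) : Prop :=
  ∀ (g : G) (ξ : ℓ²(G, H)) (h : G), L g ξ h = ξ (g⁻¹ * h)

/-- `X` is homogeneous of degree `g` if it sends the block `δ_h · H` into `δ_{gh} · H` for every
`h`. This is encoded by saying that `X ξ k` depends only on `ξ (g⁻¹ * k)`. -/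
def IsHomogeneousOperator [Group G] (g : G) (X : ℓ²(G, H) →L[ℂ] ℓ²(G, H)) : Prop :=
  ∀ (ξ : ℓ²(G, H)) (k : G), ξ (g⁻¹ * k) = 0 → X ξ k = 0

namespace IsHomogeneousOperator

variable [Group G] {g h : G} {X Y : ℓ²(G, H) →L[ℂ] ℓ²(G, H)}

lemma one : IsHomogeneousOperator 1 (1 : ℓ²(G, H) →L[ℂ] ℓ²(G, H)) := fun ξ k hk ↦ by
  rwa [inv_one, one_mul] at hk

lemma mul (hX : IsHomogeneousOperator g X) (hY : IsHomogeneousOperator h Y) :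
    IsHomogeneousOperator (g * h) (X * Y) := fun ξ k hk ↦
  hX _ _ (hY _ _ (by rwa [← mul_assoc, ← mul_inv_rev]))

lemma apply_single [DecidableEq G] (hX : IsHomogeneousOperator g X) (ξ : ℓ²(G, H)) (k : G) :
    X (lp.single 2 (g⁻¹ * k) (ξ (g⁻¹ * k))) k = X ξ k := by
  rw [← sub_eq_zero, ← Pi.sub_apply, ← lp.coeFn_sub, ← map_sub]
  refine hX _ _ ?_
  rw [lp.coeFn_sub, Pi.sub_apply, lp.single_apply_self, sub_self]

lemma apply_single_of_ne [DecidableEq G] (hX : IsHomogeneousOperator g X) (v : H) {l k : G}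
    (hl : l ≠ g * k) : X (lp.single 2 k v) l = 0 :=
  hX _ _ (lp.single_apply_ne _ _ _ fun h ↦ hl (inv_mul_eq_iff_eq_mul.mp h))

protected lemma star [CompleteSpace H] (hX : IsHomogeneousOperator g X) :
    IsHomogeneousOperator g⁻¹ (star X) := fun ξ k hk ↦ by
  classical
  rw [inv_inv] at hk
  refine ext_inner_right ℂ fun v ↦ ?_
  rw [← lp.inner_single_right, star_eq_adjoint, adjoint_inner_left, lp.inner_eq_tsum,
    inner_zero_left]
  refine (tsum_congr fun l ↦ ?_).trans tsum_zero
  obtain rfl | hl := eq_or_ne l (g * k)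
  · rw [hk, inner_zero_left]
  · rw [hX.apply_single_of_ne v hl, inner_zero_right]

end IsHomogeneousOperator

variable (G H) in
/-- The homogeneous operators of all degrees, the monomials of the `G`-grading of
operators on `ℓ²(G, H)`. -/
def homogeneousOperators [Group G] : Submonoid (ℓ²(G, H) →L[ℂ] ℓ²(G, H)) where
  carrier := {X | ∃ g, IsHomogeneousOperator g X}
  one_mem' := ⟨1, .one⟩
  mul_mem' := fun ⟨g, hX⟩ ⟨h, hY⟩ ↦ ⟨g * h, hX.mul hY⟩

lemma star_mem_homogeneousOperators [Group G] [CompleteSpace H] {X : ℓ²(G, H) →L[ℂ] ℓ²(G, H)}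
    (hX : X ∈ homogeneousOperators G H) : star X ∈ homogeneousOperators G H :=
  let ⟨g, hg⟩ := hX
  ⟨g⁻¹, hg.star⟩

lemma adjoin_subset_span_homogeneousOperators [Group G] [CompleteSpace H]
    {S : Set (ℓ²(G, H) →L[ℂ] ℓ²(G, H))} (hS : S ⊆ homogeneousOperators G H) :
    (StarAlgebra.adjoin ℂ S : Set (ℓ²(G, H) →L[ℂ] ℓ²(G, H))) ⊆
      Submodule.span ℂ (homogeneousOperators G H : Set (ℓ²(G, H) →L[ℂ] ℓ²(G, H))) := by
  have star_subset : star S ⊆ homogeneousOperators G H := fun X hX ↦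
    star_star X ▸ star_mem_homogeneousOperators (hS hX)
  intro X hX
  rw [SetLike.mem_coe, ← StarSubalgebra.mem_toSubalgebra, ← Subalgebra.mem_toSubmodule,
    StarAlgebra.adjoin_eq_span] at hX
  exact Submodule.span_mono (Submonoid.closure_le.mpr (Set.union_subset hS star_subset)) hX

namespace IsBlockDiagonalCompression

variable [DecidableEq G] {π : (ℓ²(G, H) →L[ℂ] ℓ²(G, H)) → (ℓ²(G, H) →L[ℂ] ℓ²(G, H))}

lemma apply_apply (hπ : IsBlockDiagonalCompression π) (X : ℓ²(G, H) →L[ℂ] ℓ²(G, H)) (ξ : ℓ²(G, H))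
    (h : G) : π X ξ h = X (lp.single 2 h (ξ h)) h := by
  refine ext_inner_right ℂ fun v ↦ ?_
  rw [← lp.inner_single_right, hπ, tsum_eq_single h fun g hg ↦ ?_]
  · rw [lp.single_apply_self, lp.inner_single_right]
  · rw [lp.single_apply_ne _ _ _ hg, lp.single_zero, inner_zero_right]

lemma apply_single (hπ : IsBlockDiagonalCompression π) (X : ℓ²(G, H) →L[ℂ] ℓ²(G, H))
    (ξ : ℓ²(G, H)) (h : G) : π X (lp.single 2 h (ξ h)) = lp.single 2 h (π X ξ h) := by
  ext k
  rw [hπ.apply_apply]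
  obtain rfl | hk := eq_or_ne k h
  · rw [lp.single_apply_self, lp.single_apply_self, hπ.apply_apply]
  · rw [lp.single_apply_ne _ _ _ hk, lp.single_apply_ne _ _ _ hk, lp.single_zero, map_zero,
      lp.coeFn_zero, Pi.zero_apply]

lemma map_nonneg [CompleteSpace H] (hπ : IsBlockDiagonalCompression π)
    {X : ℓ²(G, H) →L[ℂ] ℓ²(G, H)} (hX : 0 ≤ X) : 0 ≤ π X := by
  rw [nonneg_iff_isPositive] at hX ⊢
  refine (isPositive_iff_complex _).mpr fun ξ ↦ ?_
  have inner_nonneg : 0 ≤ ⟪π X ξ, ξ⟫_ℂ := by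
    rw [hπ]
    exact tsum_nonneg fun g ↦ hX.inner_nonneg_left _
  obtain ⟨re_nonneg, im_eq_zero⟩ := Complex.nonneg_iff.mp inner_nonneg
  exact ⟨Complex.ext rfl im_eq_zero, re_nonneg⟩

/-- A block-diagonal compression, bundled as a positive linear map. -/
def toPositiveLinearMap [CompleteSpace H] (hπ : IsBlockDiagonalCompression π) :
    (ℓ²(G, H) →L[ℂ] ℓ²(G, H)) →ₚ[ℂ] (ℓ²(G, H) →L[ℂ] ℓ²(G, H)) :=
  .mk₀
    { toFun := π
      map_add' := fun X Y ↦ by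
        ext ξ h
        simp only [hπ.apply_apply, add_apply, lp.coeFn_add, Pi.add_apply]
      map_smul' := fun c X ↦ by
        ext ξ h
        simp only [hπ.apply_apply, smul_apply, lp.coeFn_smul, Pi.smul_apply, RingHom.id_apply] }
    fun _ ↦ hπ.map_nonneg

variable [CompleteSpace H]

lemma isConditionalExpectation (hπ : IsBlockDiagonalCompression π) :
    IsConditionalExpectation hπ.toPositiveLinearMap where
  map_one := by
    ext ξ h
    exact (hπ.apply_apply 1 ξ h).trans (lp.single_apply_self _ _ _)
  map_mul_map X Y := by
    ext ξ h
    change π (X * π Y) ξ h = π X (π Y ξ) h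
    rw [hπ.apply_apply, hπ.apply_apply, mul_apply_eq_comp, hπ.apply_single]

end IsBlockDiagonalCompression

namespace IsLeftTranslation

variable [Group G] {L : G → (ℓ²(G, H) →L[ℂ] ℓ²(G, H))}

lemma isHomogeneousOperator (hL : IsLeftTranslation L) (g : G) :
    IsHomogeneousOperator g (L g) := fun ξ k hk ↦ by rw [hL, hk]

variable [CompleteSpace H]

lemma star_eq (hL : IsLeftTranslation L) (g : G) : star (L g) = L g⁻¹ := by
  rw [star_eq_adjoint, eq_comm, eq_adjoint_iff]
  intro ξ η
  rw [lp.inner_eq_tsum, lp.inner_eq_tsum, ← (Equiv.mulLeft g).tsum_eq fun h ↦ ⟪ξ h, L g η h⟫_ℂ]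
  simp only [hL _ _ _, inv_inv, Equiv.coe_mulLeft, inv_mul_cancel_left]

lemma star_mul_eq (hL : IsLeftTranslation L) (g h : G) : star (L g) * L h = L (g⁻¹ * h) := by
  ext ξ k
  rw [hL.star_eq, mul_apply_eq_comp, hL, hL, hL, mul_inv_rev, mul_assoc]

variable [DecidableEq G] {π : (ℓ²(G, H) →L[ℂ] ℓ²(G, H)) → (ℓ²(G, H) →L[ℂ] ℓ²(G, H))}

lemma isOrthonormalSystem (hL : IsLeftTranslation L) (hπ : IsBlockDiagonalCompression π) :
    IsOrthonormalSystem hπ.toPositiveLinearMap L where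
  map_star_mul_self g := by
    ext ξ k
    change π _ ξ k = ξ k
    rw [hL.star_mul_eq, hπ.apply_apply, hL, inv_mul_cancel, inv_one, one_mul, lp.single_apply_self]
  map_star_mul_of_ne {g h} hgh := by
    ext ξ k
    change π _ ξ k = 0
    rw [hL.star_mul_eq, hπ.apply_apply, hL, lp.single_apply_ne _ _ _ ?_]
    rwa [ne_eq, mul_eq_right, inv_eq_one, inv_mul_eq_one]

lemma mul_coeff_eq (hL : IsLeftTranslation L) (hπ : IsBlockDiagonalCompression π) {g : G}
    {X : ℓ²(G, H) →L[ℂ] ℓ²(G, H)} (hX : IsHomogeneousOperator g X) :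
    L g * π (star (L g) * X) = X := by
  ext ξ k
  rw [mul_apply_eq_comp, hL, hπ.apply_apply, mul_apply_eq_comp, hL.star_eq, hL, inv_inv,
    mul_inv_cancel_left, hX.apply_single]

lemma span_homogeneousOperators_le (hL : IsLeftTranslation L) (hπ : IsBlockDiagonalCompression π) :
    Submodule.span ℂ (homogeneousOperators G H : Set (ℓ²(G, H) →L[ℂ] ℓ²(G, H))) ≤
      Submodule.span ℂ {X | ∃ g Y, L g * hπ.toPositiveLinearMap Y = X} :=
  Submodule.span_mono fun _ ⟨g, hX⟩ ↦ ⟨g, _, hL.mul_coeff_eq hπ hX⟩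

end IsLeftTranslation

theorem hadamard_stmt3_general [CompleteSpace H] [Group G] [DecidableEq G]
    {L : G → (ℓ²(G, H) →L[ℂ] ℓ²(G, H))} (hL : IsLeftTranslation L)
    {π : (ℓ²(G, H) →L[ℂ] ℓ²(G, H)) → (ℓ²(G, H) →L[ℂ] ℓ²(G, H))}
    (hπ : IsBlockDiagonalCompression π) {X : ℓ²(G, H) →L[ℂ] ℓ²(G, H)}
    (hX : X ∈ closure
      (Submodule.span ℂ (homogeneousOperators G H : Set (ℓ²(G, H) →L[ℂ] ℓ²(G, H))) : Set _)) :
    HasSum (fun g : G ↦ star (π (star (L g) * X)) * π (star (L g) * X)) (π (star X * X)) ∧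
      ∀ ε : ℝ, 0 < ε → ∃ s : Finset G, ∀ t : Finset G, s ⊆ t →
        0 ≤ π (star X * X) - ∑ g ∈ t, star (π (star (L g) * X)) * π (star (L g) * X) ∧
        π (star X * X) - ∑ g ∈ t, star (π (star (L g) * X)) * π (star (L g) * X) ≤
          ε ^ 2 • (1 : ℓ²(G, H) →L[ℂ] ℓ²(G, H)) := by
  have hE := hπ.isConditionalExpectation
  have hu := hL.isOrthonormalSystem hπ
  have hX' := closure_mono (hL.span_homogeneousOperators_le hπ) hX
  refine ⟨hu.hasSum_star_coeff_mul_coeff hE hX', fun ε hε ↦ ?_⟩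
  obtain ⟨s, hs⟩ := Filter.eventually_atTop.mp
    (hu.eventually_map_star_mul_self_sub_sum_le hE hX' hε)
  exact ⟨s, fun t hst ↦ ⟨sub_nonneg.mpr (hu.sum_star_coeff_mul_coeff_le hE t X), hs t hst⟩⟩

end BlockOperators

theorem hadamard_stmt3
    {H : Type} [NormedAddCommGroup H] [InnerProductSpace ℂ H] [CompleteSpace H]
    {G : Type} [Group G] [DecidableEq G]
    (𝒜 : StarSubalgebra ℂ (H →L[ℂ] H))
    (h𝒜 : IsClosed (𝒜 : Set (H →L[ℂ] H)))
    (hnd : Dense (↑(Submodule.span ℂ {v : H | ∃ A ∈ 𝒜, ∃ w : H, v = A w}) : Set H))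
    (α : G → (𝒜 ≃⋆ₐ[ℂ] 𝒜))
    (hα1 : ∀ A, α 1 A = A)
    (hαmul : ∀ g h A, α (g * h) A = α g (α h A))
    (Ψ : 𝒜 → (l2 G H →L[ℂ] l2 G H))
    (hΨ : ∀ (A : 𝒜) (ξ : l2 G H) (g : G),
      (Ψ A ξ : ∀ _ : G, H) g = ((α g⁻¹ A : 𝒜) : H →L[ℂ] H) ((ξ : ∀ _ : G, H) g))
    (L : G → (l2 G H →L[ℂ] l2 G H))
    (hL : ∀ (g : G) (ξ : l2 G H) (h : G),
      (L g ξ : ∀ _ : G, H) h = (ξ : ∀ _ : G, H) (g⁻¹ * h))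
    (𝒞 : Set (l2 G H →L[ℂ] l2 G H))
    (h𝒞 : 𝒞 = ((StarAlgebra.adjoin ℂ
        (Set.range Ψ ∪ Set.range L)).topologicalClosure : Set _))
    (π : (l2 G H →L[ℂ] l2 G H) → (l2 G H →L[ℂ] l2 G H))
    (hπ : ∀ (X : l2 G H →L[ℂ] l2 G H) (ξ η : l2 G H), ⟪π X ξ, η⟫_ℂ =
      ∑' g : G, ⟪X (lp.single 2 g ((ξ : ∀ _ : G, H) g)),
        lp.single 2 g ((η : ∀ _ : G, H) g)⟫_ℂ)
    :
    ∀ X ∈ 𝒞,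
      HasSum (fun g : G => star (π (star (L g) * X)) * π (star (L g) * X))
        (π (star X * X)) ∧
      (∀ ε : ℝ, 0 < ε → ∃ s : Finset G, ∀ t : Finset G, s ⊆ t →
        (0 : l2 G H →L[ℂ] l2 G H)
            ≤ π (star X * X) - ∑ g ∈ t, star (π (star (L g) * X)) * π (star (L g) * X) ∧
        π (star X * X) - ∑ g ∈ t, star (π (star (L g) * X)) * π (star (L g) * X)
            ≤ ε ^ 2 • (1 : l2 G H →L[ℂ] l2 G H)) := by
  have generators_homogeneous : Set.range Ψ ∪ Set.range L ⊆ homogeneousOperators G H := by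
    rintro _ (⟨A, rfl⟩ | ⟨g, rfl⟩)
    · exact ⟨1, fun ξ k hk ↦ by
        rw [hΨ, ← one_mul k, ← inv_one, hk, map_zero]⟩
    · exact ⟨g, IsLeftTranslation.isHomogeneousOperator hL g⟩
  subst h𝒞
  exact fun X hX ↦ hadamard_stmt3_general hL hπ
    (closure_mono (adjoin_subset_span_homogeneousOperators generators_homogeneous) hX)
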